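/- Let 𝒲 = [e_n] be a Banach space with a Schauder basis, and let 𝒳 = [x_n] and 𝒴 = [y_n] be block subspaces of 𝒲 such that x_n ∈ 𝒴 for all but finitely many n. If 𝒴 = [y_n] is α-minimal, then 𝒳 = [x_n] is α-minimal. In particular, α-minimality is preserved by passing to block subspaces. -/

import Mathlib

open Filter Topology

namespace Rosendal

variable {𝒲 : Type} [NormedAddCommGroup 𝒲] [NormedSpace ℝ 𝒲]

/-- `(e n)` is a Schauder basis of the Banach space `𝒲`: every vector has a unique
representation as a norm-convergent series `∑ a n • e n`. -/
def IsSchauderBasis (e : ℕ → 𝒲) : Prop :=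
  ∀ x : 𝒲, ∃! a : ℕ → ℝ,
    Tendsto (fun N => ∑ i ∈ Finset.range N, a i • e i) atTop (𝓝 x)

/-- `x` is a linear combination of the vectors `b i`, `i ∈ s`. -/
def SuppIn (b : ℕ → 𝒲) (x : 𝒲) (s : Finset ℕ) : Prop :=
  ∃ a : ℕ → ℝ, x = ∑ i ∈ s, a i • b i

/-- `(y n)` is a block sequence with respect to the basic sequence `(b n)`: a sequence of
nonzero finite linear combinations of the `b i` with successive supports. -/
def IsBlockSeq (b : ℕ → 𝒲) (y : ℕ → 𝒲) : Prop :=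
  (∀ n, y n ≠ 0) ∧
  ∃ D : ℕ → Finset ℕ, (∀ n, SuppIn b (y n) (D n)) ∧
    ∀ n, ∀ i ∈ D n, ∀ j ∈ D (n + 1), i < j

/-- The closed linear span of a set. -/
noncomputable def closedSpan (S : Set 𝒲) : Submodule ℝ 𝒲 :=
  (Submodule.span ℝ S).topologicalClosure

/-- `(x i)_{i<k} ∼_K (y i)_{i<k}`:
`(1/K)‖∑ a i • x i‖ ≤ ‖∑ a i • y i‖ ≤ K‖∑ a i • x i‖` for all scalars. -/
def SeqEquiv (K : ℝ) (k : ℕ) (x y : ℕ → 𝒲) : Prop :=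
  ∀ a : ℕ → ℝ,
    (1 / K) * ‖∑ i ∈ Finset.range k, a i • x i‖ ≤ ‖∑ i ∈ Finset.range k, a i • y i‖ ∧
    ‖∑ i ∈ Finset.range k, a i • y i‖ ≤ K * ‖∑ i ∈ Finset.range k, a i • x i‖

/-- The tree `T((x n), Y, K)` of finite sequences `(y 0, …, y k)` of vectors of `Y` that are
`K`-equivalent to `(x 0, …, x k)`, ordered by end-extension. -/
def embTree (x : ℕ → 𝒲) (Y : Set 𝒲) (K : ℝ) : Set (List 𝒲) :=
  {l | (∀ v ∈ l, v ∈ Y) ∧ SeqEquiv K l.length (fun i => l.getD i 0) x}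

open Classical in
/-- The rank of a tree of finite sequences: if the proper end-extension relation is
well-founded (equivalently, for trees, there is no infinite branch), this is
`sup { ρ(s) + 1 : s ∈ T }` where `ρ` is the usual rank function; otherwise it is `∞ = ⊤`. -/
noncomputable def treeRank (T : Set (List 𝒲)) : WithTop Ordinal :=
  if h : WellFounded (fun t s : T => s.val <+: t.val ∧ s.val ≠ t.val) then
    ((⨆ s : T, Order.succ ((h.apply s).rank) : Ordinal) : WithTop Ordinal)
  else ⊤

open Classical in
/-- The embeddability index `Emb((x n), Y) = sup_{K ≥ 1} rank T((x n), Y, K)`. -/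
noncomputable def embIndex (x : ℕ → 𝒲) (Y : Set 𝒲) : WithTop Ordinal :=
  if ∃ K : ℝ, 1 ≤ K ∧ treeRank (embTree x Y K) = ⊤ then ⊤
  else ((sSup {o : Ordinal | ∃ K : ℝ, 1 ≤ K ∧
      (o : WithTop Ordinal) = treeRank (embTree x Y K)} : Ordinal) : WithTop Ordinal)

/-- `(I m)` is a sequence of successive nonempty finite intervals `I 0 < I 1 < …` of `ℕ`. -/
def IntervalSeq (I : ℕ → Finset ℕ) : Prop :=
  (∀ m, ∃ a b : ℕ, a ≤ b ∧ I m = Finset.Icc a b) ∧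
  ∀ m, ∀ i ∈ I m, ∀ j ∈ I (m + 1), i < j

/-- The closed subspace `[b n : n ∉ ⋃_{m ∈ A} I m]`. -/
noncomputable def residualSpace (b : ℕ → 𝒲) (I : ℕ → Finset ℕ) (A : Set ℕ) :
    Submodule ℝ 𝒲 :=
  closedSpan {v | ∃ n : ℕ, (∀ m ∈ A, n ∉ I m) ∧ v = b n}

/-- The space `[b n]` with its basis `(b n)` is `α`-tight. -/
def IsAlphaTight (b : ℕ → 𝒲) (α : Ordinal) : Prop :=
  ∀ y : ℕ → 𝒲, IsBlockSeq b y →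
    ∃ I : ℕ → Finset ℕ, IntervalSeq I ∧
      ∀ A : Set ℕ, A.Infinite →
        embIndex y (residualSpace b I A : Set 𝒲) ≤ (α : WithTop Ordinal)

/-- The space `[b n]` with its basis `(b n)` is `α`-minimal: every block subspace `[z n]`
`α`-embeds into every infinite-dimensional subspace `Y ⊆ [b n]`. -/
def IsAlphaMinimal (b : ℕ → 𝒲) (α : Ordinal) : Prop :=
  ∀ z : ℕ → 𝒲, IsBlockSeq b z →
    ∀ Y : Submodule ℝ 𝒲, (Y : Set 𝒲) ⊆ (closedSpan (Set.range b) : Set 𝒲) →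
      ¬FiniteDimensional ℝ Y →
        (α : WithTop Ordinal) ≤ embIndex z (Y : Set 𝒲)

/-- `X` embeds isomorphically into `Y` (as an isomorphism onto its image). -/
def LinIsoEmbeds (X Y : Submodule ℝ 𝒲) : Prop :=
  ∃ T : X →ₗ[ℝ] 𝒲, (∀ v : X, T v ∈ Y) ∧
    ∃ c C : ℝ, 0 < c ∧ ∀ v : X, c * ‖v‖ ≤ ‖T v‖ ∧ ‖T v‖ ≤ C * ‖v‖

/-- `X` is a minimal space: it embeds isomorphically into every infinite-dimensional
closed subspace of itself. -/
def IsMinimalSpace (X : Submodule ℝ 𝒲) : Prop :=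
  ∀ Y : Submodule ℝ 𝒲, Y ≤ X → IsClosed (Y : Set 𝒲) → ¬FiniteDimensional ℝ Y →
    LinIsoEmbeds X Y

/-- `F` embeds into `Y` with constant `K`. -/
def KEmbeds (K : ℝ) (F Y : Submodule ℝ 𝒲) : Prop :=
  ∃ T : F →ₗ[ℝ] 𝒲, (∀ v : F, T v ∈ Y) ∧
    ∀ v : F, (1 / K) * ‖v‖ ≤ ‖T v‖ ∧ ‖T v‖ ≤ K * ‖v‖

end Rosendal

/-!
A block sequence of `(e n)` inherits biorthogonal functionals, namely multiples of coordinate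
functionals of `(e n)` with increasing indices. Hence a block sequence of `(e n)` lying in `[y n]`
is a block sequence of `(y n)`; this applies to a tail of any block sequence `(z n)` of `(x n)`.
As `[x n]` is contained in the sum of `[y n]` and a finite-dimensional space, every
infinite-dimensional subspace of `[x n]` has an infinite-dimensional intersection with `[y n]`, so
the tail of `(z n)` `α`-embeds into it.

The missing initial vectors are restored one at a time. Given an infinite-dimensional `Y`, choose
`f ∈ Y` and a functional `φ` with `φ f = 1`. Prepending `f` to a finite sequence in `Y ∩ ker φ` that
is `K`-equivalent to an initial part of `(z 1, z 2, …)` gives a sequence in `Y` that is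
`C`-equivalent to an initial part of `(z 0, z 1, …)`, where `C` depends only on `K`, `f`, `φ` and
`(z n)`. Prepending respects end-extension, so it does not lower the rank of the tree, and the
change of constant is harmless because the embeddability index is a supremum over all constants.
-/

namespace Rosendal

section BiorthogonalSystems

variable {ι 𝕜 E : Type*} [NormedField 𝕜] [SeminormedAddCommGroup E] [NormedSpace 𝕜 E]
  {φ : ι → StrongDual 𝕜 E} {b : ι → E}

/-- The continuous functionals `φ i` are biorthogonal to the vectors `b i`, that is
`φ i (b j) = δ_ij`. A family `b` admitting such functionals is also called minimal. -/
structure IsBiorthogonal (φ : ι → StrongDual 𝕜 E) (b : ι → E) : Prop where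
  apply_self : ∀ i, φ i (b i) = 1
  apply_of_ne : ∀ ⦃i j⦄, i ≠ j → φ i (b j) = 0

namespace IsBiorthogonal

theorem comp_injective {κ : Type*} (hφ : IsBiorthogonal φ b) {k : κ → ι}
    (hk : Function.Injective k) : IsBiorthogonal (fun n => φ (k n)) (fun n => b (k n)) where
  apply_self n := hφ.apply_self (k n)
  apply_of_ne _ _ hmn := hφ.apply_of_ne (hk.ne hmn)

theorem apply_sum_of_mem (hφ : IsBiorthogonal φ b) {s : Finset ι} {i : ι} (hi : i ∈ s)
    (a : ι → 𝕜) : φ i (∑ j ∈ s, a j • b j) = a i := by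
  rw [map_sum, Finset.sum_eq_single_of_mem i hi fun j _ hji => by
    rw [map_smul, hφ.apply_of_ne hji.symm, smul_zero], map_smul, hφ.apply_self, smul_eq_mul,
    mul_one]

theorem apply_sum_of_notMem (hφ : IsBiorthogonal φ b) {s : Finset ι} {i : ι} (hi : i ∉ s)
    (a : ι → 𝕜) : φ i (∑ j ∈ s, a j • b j) = 0 := by
  rw [map_sum]
  refine Finset.sum_eq_zero fun j hj => ?_
  rw [map_smul, hφ.apply_of_ne (ne_of_mem_of_not_mem hj hi).symm, smul_zero]

theorem eq_of_mem_span (hφ : IsBiorthogonal φ b) {u v : E}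
    (hu : u ∈ Submodule.span 𝕜 (Set.range b)) (hv : v ∈ Submodule.span 𝕜 (Set.range b))
    (huv : ∀ i, φ i u = φ i v) : u = v := by
  obtain ⟨a, ha⟩ := Finsupp.mem_span_range_iff_exists_finsupp.1 (sub_mem hu hv)
  have ha₀ : a = 0 := by
    ext i
    by_contra hi
    have hai : φ i (u - v) = a i := by
      rw [← ha, Finsupp.sum, hφ.apply_sum_of_mem (Finsupp.mem_support_iff.2 hi)]
    exact hi (by rw [← hai, map_sub, huv, sub_self, Finsupp.coe_zero, Pi.zero_apply])
  rw [← sub_eq_zero, ← ha, ha₀, Finsupp.sum_zero_index]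

end IsBiorthogonal

end BiorthogonalSystems

section SchauderBases

variable {𝒲 : Type} [NormedAddCommGroup 𝒲] [NormedSpace ℝ 𝒲] {e : ℕ → 𝒲}

namespace IsSchauderBasis

/-- The linear map taking a vector to its sequence of coordinates in a Schauder basis. -/
noncomputable def coeff (he : IsSchauderBasis e) : 𝒲 →ₗ[ℝ] ℕ → ℝ where
  toFun x := (he x).choose
  map_add' x y := (he (x + y)).unique (he (x + y)).choose_spec.1 <| by
    simpa [add_smul, Finset.sum_add_distrib] using
      (he x).choose_spec.1.add (he y).choose_spec.1
  map_smul' c x := (he (c • x)).unique (he (c • x)).choose_spec.1 <| by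
    simpa [mul_smul, Finset.smul_sum] using (he x).choose_spec.1.const_smul c

theorem tendsto_sum_coeff (he : IsSchauderBasis e) (x : 𝒲) :
    Tendsto (fun N => ∑ i ∈ Finset.range N, he.coeff x i • e i) atTop (𝓝 x) :=
  (he x).choose_spec.1

theorem coeff_eq_of_tendsto (he : IsSchauderBasis e) {x : 𝒲} {a : ℕ → ℝ}
    (ha : Tendsto (fun N => ∑ i ∈ Finset.range N, a i • e i) atTop (𝓝 x)) :
    he.coeff x = a :=
  (he x).unique (he.tendsto_sum_coeff x) ha

theorem coeff_self (he : IsSchauderBasis e) (n : ℕ) : he.coeff (e n) = Pi.single n 1 := by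
  refine he.coeff_eq_of_tendsto (tendsto_const_nhds.congr' ?_)
  filter_upwards [eventually_gt_atTop n] with N hN
  simp [Pi.single_apply, hN]

theorem ne_zero (he : IsSchauderBasis e) (n : ℕ) : e n ≠ 0 := by
  intro hn
  have h : he.coeff (e n) n = 1 := by rw [he.coeff_self, Pi.single_eq_same]
  rw [hn, map_zero] at h
  exact zero_ne_one h

/-- The linear map taking `x` to its sequence of partial sums together with their limit `x`, as a
continuous function on the one-point compactification of `ℕ`. The target is complete for the
supremum norm, which makes the closed graph theorem applicable. -/
noncomputable def partialSums (he : IsSchauderBasis e) : 𝒲 →ₗ[ℝ] C(OnePoint ℕ, 𝒲) where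
  toFun x := OnePoint.continuousMapMkNat _ x (he.tendsto_sum_coeff x)
  map_add' x y := by
    ext p
    cases p using OnePoint.rec with
    | infty => rfl
    | coe n =>
      change ∑ i ∈ Finset.range n, he.coeff (x + y) i • e i =
        ∑ i ∈ Finset.range n, he.coeff x i • e i + ∑ i ∈ Finset.range n, he.coeff y i • e i
      simp [add_smul, Finset.sum_add_distrib]
  map_smul' c x := by
    ext p
    cases p using OnePoint.rec with
    | infty => rfl
    | coe n =>
      change ∑ i ∈ Finset.range n, he.coeff (c • x) i • e i =
        c • ∑ i ∈ Finset.range n, he.coeff x i • e i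
      simp [mul_smul, Finset.smul_sum]

theorem partialSums_coe (he : IsSchauderBasis e) (x : 𝒲) (n : ℕ) :
    he.partialSums x n = ∑ i ∈ Finset.range n, he.coeff x i • e i :=
  rfl

theorem partialSums_succ_sub (he : IsSchauderBasis e) (x : 𝒲) (n : ℕ) :
    he.partialSums x ↑(n + 1) - he.partialSums x n = he.coeff x n • e n := by
  rw [partialSums_coe, partialSums_coe, Finset.sum_range_succ_sub_sum]

theorem eq_partialSums (he : IsSchauderBasis e) {u : C(OnePoint ℕ, 𝒲)} (hu₀ : u (0 : ℕ) = 0)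
    (hu : ∀ n : ℕ, u ↑(n + 1) - u n ∈ Submodule.span ℝ {e n}) :
    u = he.partialSums (u OnePoint.infty) := by
  choose a ha using fun n => Submodule.mem_span_singleton.1 (hu n)
  have hsum (n : ℕ) : u n = ∑ i ∈ Finset.range n, a i • e i := by
    simp_rw [ha, Finset.sum_range_sub (fun i : ℕ => u i), hu₀, sub_zero]
  have hlim : Tendsto (fun n : ℕ => u n) atTop (𝓝 (u OnePoint.infty)) :=
    (OnePoint.continuous_iff_from_nat u).1 u.continuous
  have hcoeff : he.coeff (u OnePoint.infty) = a :=
    he.coeff_eq_of_tendsto (by simpa only [hsum] using hlim)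
  ext p
  cases p using OnePoint.rec with
  | infty => rfl
  | coe n => rw [partialSums_coe, hcoeff, hsum]

theorem continuous_partialSums [CompleteSpace 𝒲] (he : IsSchauderBasis e) :
    Continuous he.partialSums := by
  refine he.partialSums.continuous_of_seq_closed_graph fun u x y hux huy => ?_
  have heval (p : OnePoint ℕ) : Tendsto (fun k => he.partialSums (u k) p) atTop (𝓝 (y p)) :=
    ((continuous_eval_const p).tendsto y).comp huy
  have hinfty : y OnePoint.infty = x := tendsto_nhds_unique (heval OnePoint.infty) hux
  have hzero : y (0 : ℕ) = 0 := by
    refine tendsto_nhds_unique (heval (0 : ℕ)) ?_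
    simp only [partialSums_coe, Finset.range_zero, Finset.sum_empty, tendsto_const_nhds]
  have hincr (n : ℕ) : y ↑(n + 1) - y n ∈ Submodule.span ℝ {e n} := by
    refine (Submodule.span ℝ {e n}).closed_of_finiteDimensional.mem_of_tendsto
      ((heval ↑(n + 1)).sub (heval n)) (Eventually.of_forall fun k => ?_)
    rw [partialSums_succ_sub]
    exact Submodule.smul_mem _ _ (Submodule.mem_span_singleton_self _)
  rw [← hinfty]
  exact he.eq_partialSums hzero hincr

theorem continuous_coeff [CompleteSpace 𝒲] (he : IsSchauderBasis e) (n : ℕ) :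
    Continuous fun x => he.coeff x n := by
  rw [(isClosedEmbedding_smul_left (𝕜 := ℝ) (he.ne_zero n)).isEmbedding.continuous_iff]
  have heval (p : OnePoint ℕ) : Continuous fun x => he.partialSums x p :=
    (continuous_eval_const p).comp he.continuous_partialSums
  exact ((heval ↑(n + 1)).sub (heval n)).congr fun x => he.partialSums_succ_sub x n

/-- The coordinate functionals of a Schauder basis of a Banach space. -/
noncomputable def coord [CompleteSpace 𝒲] (he : IsSchauderBasis e) (n : ℕ) : StrongDual ℝ 𝒲 :=
  ⟨LinearMap.proj n ∘ₗ he.coeff, he.continuous_coeff n⟩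

theorem isBiorthogonal_coord [CompleteSpace 𝒲] (he : IsSchauderBasis e) :
    IsBiorthogonal he.coord e where
  apply_self n := (congrFun (he.coeff_self n) n).trans (Pi.single_eq_same n 1)
  apply_of_ne i j hij := (congrFun (he.coeff_self j) i).trans (Pi.single_eq_of_ne hij 1)

end IsSchauderBasis

end SchauderBases

section BlockSequences

variable {𝒲 : Type} [NormedAddCommGroup 𝒲] [NormedSpace ℝ 𝒲] {b x y z : ℕ → 𝒲}
  {φ ψ : ℕ → StrongDual ℝ 𝒲}

theorem suppIn_iff_mem_span {v : 𝒲} {s : Finset ℕ} :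
    SuppIn b v s ↔ v ∈ Submodule.span ℝ (b '' s) := by
  constructor
  · rintro ⟨a, rfl⟩
    exact Submodule.sum_mem _ fun i hi =>
      Submodule.smul_mem _ _ (Submodule.subset_span (Set.mem_image_of_mem b hi))
  · intro hv
    obtain ⟨a, has, rfl⟩ := (Finsupp.mem_span_image_iff_linearCombination ℝ).1 hv
    exact ⟨a, Finsupp.linearCombination_apply_of_mem_supported ℝ has⟩

theorem SuppIn.biUnion {v : 𝒲} {s : Finset ℕ} {D : ℕ → Finset ℕ} (hv : SuppIn x v s)
    (hx : ∀ i, SuppIn b (x i) (D i)) : SuppIn b v (s.biUnion D) := by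
  rw [suppIn_iff_mem_span] at hv ⊢
  refine Submodule.span_le.2 ?_ hv
  rintro _ ⟨i, hi, rfl⟩
  refine Submodule.span_mono (Set.image_mono ?_) (suppIn_iff_mem_span.1 (hx i))
  exact Finset.coe_subset.2 (Finset.subset_biUnion_of_mem D hi)

theorem SuppIn.apply_eq_zero {v : 𝒲} {s : Finset ℕ} (hv : SuppIn b v s)
    (hφ : IsBiorthogonal φ b) {i : ℕ} (hi : i ∉ s) : φ i v = 0 := by
  obtain ⟨a, rfl⟩ := hv
  exact hφ.apply_sum_of_notMem hi a

namespace IsBlockSeq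

theorem exists_supports (hz : IsBlockSeq b z) :
    ∃ D : ℕ → Finset ℕ, (∀ n, SuppIn b (z n) (D n)) ∧ (∀ n, (D n).Nonempty) ∧
      ∀ ⦃m n⦄, m < n → ∀ i ∈ D m, ∀ j ∈ D n, i < j := by
  obtain ⟨hne, D, hD, hlt⟩ := hz
  have hDne (n : ℕ) : (D n).Nonempty := by
    obtain ⟨a, ha⟩ := hD n
    exact Finset.nonempty_of_sum_ne_zero (ha ▸ hne n)
  refine ⟨D, hD, hDne, fun m n hmn => ?_⟩
  induction n, hmn using Nat.le_induction with
  | base => exact hlt m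
  | succ n _ ih =>
    intro i hi j hj
    obtain ⟨l, hl⟩ := hDne n
    exact (ih i hi l hl).trans (hlt n l hl j hj)

theorem comp_strictMono (hz : IsBlockSeq b z) {k : ℕ → ℕ} (hk : StrictMono k) :
    IsBlockSeq b (fun n => z (k n)) := by
  obtain ⟨D, hD, -, hlt⟩ := hz.exists_supports
  exact ⟨fun n => hz.1 (k n), D ∘ k, fun n => hD (k n), fun n => hlt (hk n.lt_succ_self)⟩

theorem trans (hx : IsBlockSeq b x) (hz : IsBlockSeq x z) : IsBlockSeq b z := by
  obtain ⟨D, hD, -, hDlt⟩ := hx.exists_supports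
  obtain ⟨hne, F, hF, hFlt⟩ := hz
  refine ⟨hne, fun n => (F n).biUnion D, fun n => (hF n).biUnion hD, fun n i hi j hj => ?_⟩
  obtain ⟨p, hp, hip⟩ := Finset.mem_biUnion.1 hi
  obtain ⟨q, hq, hjq⟩ := Finset.mem_biUnion.1 hj
  exact hDlt (hFlt n p hp q hq) i hip j hjq

theorem mem_span_image_Ici (hz : IsBlockSeq b z) (n : ℕ) :
    z n ∈ Submodule.span ℝ (b '' Set.Ici n) := by
  obtain ⟨D, hD, hDne, hlt⟩ := hz.exists_supports
  choose k hk using hDne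
  have hkmono : StrictMono k := fun l m hlm => hlt hlm _ (hk l) _ (hk m)
  refine Submodule.span_mono (Set.image_mono fun i hi => ?_) (suppIn_iff_mem_span.1 (hD n))
  cases n with
  | zero => exact i.zero_le
  | succ n => exact hkmono.le_apply.trans_lt (hlt n.lt_succ_self _ (hk n) i hi)

theorem mem_span (hz : IsBlockSeq b z) (n : ℕ) : z n ∈ Submodule.span ℝ (Set.range b) :=
  Submodule.span_mono (Set.image_subset_range _ _) (hz.mem_span_image_Ici n)

theorem exists_forall_ne_apply_eq_zero (hz : IsBlockSeq b z) (hφ : IsBiorthogonal φ b) (i : ℕ) :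
    ∃ n, ∀ m ≠ n, φ i (z m) = 0 := by
  obtain ⟨D, hD, -, hlt⟩ := hz.exists_supports
  by_cases hi : ∃ n, i ∈ D n
  · obtain ⟨n, hin⟩ := hi
    refine ⟨n, fun m hmn => (hD m).apply_eq_zero hφ fun him => ?_⟩
    rcases lt_or_gt_of_ne hmn with h | h
    · exact (hlt h i him i hin).false
    · exact (hlt h i hin i him).false
  · exact ⟨0, fun m _ => (hD m).apply_eq_zero hφ fun him => hi ⟨m, him⟩⟩

theorem exists_isBiorthogonal (hz : IsBlockSeq b z) (hφ : IsBiorthogonal φ b) :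
    ∃ (k : ℕ → ℕ) (c : ℕ → ℝ), StrictMono k ∧ IsBiorthogonal (fun n => c n • φ (k n)) z := by
  obtain ⟨D, hD, -, hlt⟩ := hz.exists_supports
  have hne (n : ℕ) : ∃ i, φ i (z n) ≠ 0 := by
    by_contra! h
    exact hz.1 n (hφ.eq_of_mem_span (hz.mem_span n) (zero_mem _) fun i => by rw [h, map_zero])
  choose k hk using hne
  have hkD (n : ℕ) : k n ∈ D n := by
    by_contra hkn
    exact hk n ((hD n).apply_eq_zero hφ hkn)
  refine ⟨k, fun n => (φ (k n) (z n))⁻¹, fun m n hmn => hlt hmn _ (hkD m) _ (hkD n), ?_, ?_⟩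
  · exact fun n => inv_mul_cancel₀ (hk n)
  · intro i j hij
    obtain ⟨n, hn⟩ := hz.exists_forall_ne_apply_eq_zero hφ (k i)
    have hin : i = n := by
      by_contra hin
      exact hk i (hn i hin)
    rw [smul_apply, hn j (hin ▸ hij.symm), smul_zero]

theorem exists_apply_eq_mul (hz : IsBlockSeq b z) (hφ : IsBiorthogonal φ b)
    (hψ : IsBiorthogonal ψ z) (i : ℕ) :
    ∃ n, ∀ v ∈ closedSpan (Set.range z), φ i v = φ i (z n) * ψ n v := by
  obtain ⟨n, hn⟩ := hz.exists_forall_ne_apply_eq_zero hφ i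
  have heq : Set.EqOn (φ i) (φ i (z n) • ψ n : StrongDual ℝ 𝒲) (Set.range z) := by
    rintro _ ⟨m, rfl⟩
    rw [smul_apply, smul_eq_mul]
    rcases eq_or_ne m n with rfl | hmn
    · rw [hψ.apply_self, mul_one]
    · rw [hn m hmn, hψ.apply_of_ne hmn.symm, mul_zero]
  exact ⟨n, fun _ hv => ContinuousLinearMap.eqOn_closure_span heq hv⟩

theorem eq_sum_of_mem_closedSpan (hz : IsBlockSeq b z) (hφ : IsBiorthogonal φ b)
    (hψ : IsBiorthogonal ψ z) {v : 𝒲} (hv : v ∈ closedSpan (Set.range z))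
    (hvb : v ∈ Submodule.span ℝ (Set.range b)) {s : Finset ℕ} (hs : ∀ n ∉ s, ψ n v = 0) :
    v = ∑ n ∈ s, ψ n v • z n := by
  have hsum : ∑ n ∈ s, ψ n v • z n ∈ Submodule.span ℝ (Set.range z) :=
    Submodule.sum_mem _ fun n _ =>
      Submodule.smul_mem _ _ (Submodule.subset_span (Set.mem_range_self n))
  have hspan : Submodule.span ℝ (Set.range z) ≤ Submodule.span ℝ (Set.range b) :=
    Submodule.span_le.2 (Set.range_subset_iff.2 hz.mem_span)
  refine hφ.eq_of_mem_span hvb (hspan hsum) fun i => ?_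
  obtain ⟨n, hn⟩ := hz.exists_apply_eq_mul hφ hψ i
  rw [hn v hv, hn _ (Submodule.le_topologicalClosure _ hsum)]
  by_cases hns : n ∈ s
  · rw [hψ.apply_sum_of_mem hns]
  · rw [hψ.apply_sum_of_notMem hns, hs n hns]

theorem of_mem_closedSpan (hφ : IsBiorthogonal φ b) (hy : IsBlockSeq b y) (hz : IsBlockSeq b z)
    (hzy : ∀ n, z n ∈ closedSpan (Set.range y)) : IsBlockSeq y z := by
  obtain ⟨k, c, hk, hψ⟩ := hy.exists_isBiorthogonal hφ
  have ⟨hne, D, hD, hlt⟩ := hz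
  refine ⟨hne, fun n => (D n).preimage k hk.injective.injOn,
    fun n => ⟨fun i => (c i • φ (k i)) (z n), ?_⟩, fun n i hi j hj => ?_⟩
  · refine hy.eq_sum_of_mem_closedSpan hφ hψ (hzy n) (hz.mem_span n) fun i hi => ?_
    rw [Finset.mem_preimage] at hi
    rw [smul_apply, (hD n).apply_eq_zero hφ hi, smul_zero]
  · rw [Finset.mem_preimage] at hi hj
    exact hk.lt_iff_lt.1 (hlt n _ hi _ hj)

end IsBlockSeq

theorem closedSpan_range_le_sup_span {X : Submodule ℝ 𝒲} (hX : IsClosed (X : Set 𝒲)) {N : ℕ}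
    (hxX : ∀ n ≥ N, x n ∈ X) :
    closedSpan (Set.range x) ≤ X ⊔ Submodule.span ℝ (x '' Set.Iio N) := by
  have : FiniteDimensional ℝ (Submodule.span ℝ (x '' Set.Iio N)) :=
    FiniteDimensional.span_of_finite ℝ ((Set.finite_Iio N).image x)
  refine Submodule.topologicalClosure_minimal _ (Submodule.span_le.2 ?_)
    (Submodule.isClosed_sup_finiteDimensional _ _ hX)
  rintro _ ⟨n, rfl⟩
  rcases lt_or_ge n N with hn | hn
  · exact Submodule.mem_sup_right (Submodule.subset_span (Set.mem_image_of_mem x hn))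
  · exact Submodule.mem_sup_left (hxX n hn)

end BlockSequences

section FiniteCodimension

variable {K V W : Type*} [DivisionRing K] [AddCommGroup V] [Module K V] [AddCommGroup W]
  [Module K W] {X Y F : Submodule K V}

theorem not_finiteDimensional_inf_ker (hY : ¬FiniteDimensional K Y) (L : V →ₗ[K] W)
    [FiniteDimensional K (Y.map L)] : ¬FiniteDimensional K ↥(Y ⊓ LinearMap.ker L) := by
  intro hker
  exact hY (Module.Finite.iff_fg.2 (Submodule.fg_of_fg_map_of_fg_inf_ker L
    (Module.Finite.iff_fg.1 inferInstance) (Module.Finite.iff_fg.1 hker)))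

theorem not_finiteDimensional_inf_of_le_sup (hY : ¬FiniteDimensional K Y)
    [FiniteDimensional K F] (hYX : Y ≤ X ⊔ F) : ¬FiniteDimensional K ↥(Y ⊓ X) := by
  have hmap : Y.map X.mkQ ≤ F.map X.mkQ := by
    refine (Submodule.map_mono hYX).trans ?_
    rw [Submodule.map_sup, Submodule.mkQ_map_self, bot_sup_eq]
  have : FiniteDimensional K (Y.map X.mkQ) := Submodule.finiteDimensional_of_le hmap
  have hker := not_finiteDimensional_inf_ker hY X.mkQ
  rwa [Submodule.ker_mkQ] at hker

end FiniteCodimension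

section TreeRank

universe u

theorem rank_le_rank_of_relHom {α β : Type u} {r : α → α → Prop} {s : β → β → Prop} (f : r →r s)
    {a : α} (ha : Acc r a) (hfa : Acc s (f a)) : ha.rank ≤ hfa.rank := by
  induction ha with
  | intro a h ih =>
    rw [Acc.rank_eq]
    refine ciSup_le' fun c => Order.succ_le_of_lt ?_
    exact (ih c c.2 (hfa.inv (f.map_rel c.2))).trans_lt (Acc.rank_lt_of_rel hfa (f.map_rel c.2))

/-- `t` properly end-extends `s`; this is the relation on the tree `T` whose rank function defines
`treeRank T`. -/
abbrev ProperExtension {V : Type} (T : Set (List V)) (t s : T) : Prop :=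
  s.val <+: t.val ∧ s.val ≠ t.val

variable {V V' : Type} {T : Set (List V)} {T' : Set (List V')}

theorem treeRank_le_of_relHom (f : ProperExtension T →r ProperExtension T') :
    treeRank T ≤ treeRank T' := by
  by_cases h' : WellFounded (ProperExtension T')
  · have h : WellFounded (ProperExtension T) := RelHomClass.wellFounded f h'
    rw [treeRank, treeRank, dif_pos h, dif_pos h', WithTop.coe_le_coe]
    refine ciSup_le' fun t => ?_
    exact (Order.succ_le_succ (rank_le_rank_of_relHom f (h.apply t) (h'.apply (f t)))).trans
      (Ordinal.le_iSup (fun t' : T' => Order.succ (h'.apply t').rank) (f t))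
  · rw [treeRank.eq_def T', dif_neg h']
    exact le_top

theorem treeRank_mono {S : Set (List V)} (hST : S ⊆ T) : treeRank S ≤ treeRank T :=
  treeRank_le_of_relHom ⟨Set.inclusion hST, id⟩

theorem treeRank_le_of_cons_mem {S : Set (List V)} {v : V} (h : ∀ t ∈ S, v :: t ∈ T) :
    treeRank S ≤ treeRank T :=
  treeRank_le_of_relHom
    { toFun t := ⟨v :: t, h t t.2⟩
      map_rel' := fun hst => ⟨(List.prefix_cons_inj v).2 hst.1,
        fun heq => hst.2 (List.cons_injective heq)⟩ }

end TreeRank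

section EmbeddabilityIndex

variable {𝒲 : Type} [NormedAddCommGroup 𝒲] [NormedSpace ℝ 𝒲] {x y z : ℕ → 𝒲}

theorem embIndex_le_iff {Y : Set 𝒲} {c : WithTop Ordinal} :
    embIndex z Y ≤ c ↔ ∀ K : ℝ, 1 ≤ K → treeRank (embTree z Y K) ≤ c := by
  rw [embIndex]
  split_ifs with htop
  · obtain ⟨K, hK, hKtop⟩ := htop
    exact ⟨fun h _ _ => le_top.trans h, fun h => hKtop ▸ h K hK⟩
  push Not at htop
  have hbdd : BddAbove {o : Ordinal | ∃ K : ℝ, 1 ≤ K ∧ o = treeRank (embTree z Y K)} := by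
    refine (Ordinal.bddAbove_of_small
      (s := Set.range fun K : ℝ => (treeRank (embTree z Y K)).untopD 0)).mono ?_
    rintro o ⟨K, -, ho⟩
    exact ⟨K, by simp only [← ho, WithTop.untopD_coe]⟩
  constructor
  · intro h K hK
    obtain ⟨o, ho⟩ := WithTop.ne_top_iff_exists.1 (htop K hK)
    rw [← ho]
    exact (WithTop.coe_le_coe.2 (le_csSup hbdd ⟨K, hK, ho⟩)).trans h
  · intro h
    cases c with
    | top => exact le_top
    | coe c =>
      refine WithTop.coe_le_coe.2 (csSup_le' ?_)
      rintro o ⟨K, hK, ho⟩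
      exact WithTop.coe_le_coe.1 (ho ▸ h K hK)

theorem treeRank_embTree_le_embIndex {Y : Set 𝒲} {K : ℝ} (hK : 1 ≤ K) :
    treeRank (embTree z Y K) ≤ embIndex z Y :=
  embIndex_le_iff.1 le_rfl K hK

theorem embTree_mono {Y Y' : Set 𝒲} (h : Y ⊆ Y') (K : ℝ) : embTree z Y K ⊆ embTree z Y' K :=
  fun _ ht => ⟨fun v hv => h (ht.1 v hv), ht.2⟩

theorem embIndex_mono {Y Y' : Set 𝒲} (h : Y ⊆ Y') : embIndex z Y ≤ embIndex z Y' :=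
  embIndex_le_iff.2 fun K hK =>
    (treeRank_mono (embTree_mono h K)).trans (treeRank_embTree_le_embIndex hK)

theorem norm_smul_add_le_of_apply_eq_one {E F : Type*} [SeminormedAddCommGroup E]
    [NormedSpace ℝ E] [SeminormedAddCommGroup F] [NormedSpace ℝ F] {φ : StrongDual ℝ E}
    {p u : E} {q v : F} {K : ℝ} (hK : 0 ≤ K) (hp : φ p = 1) (hu : φ u = 0)
    (huv : ‖v‖ ≤ K * ‖u‖) (a : ℝ) :
    ‖a • q + v‖ ≤ (‖φ‖ * ‖q‖ + K * (1 + ‖φ‖ * ‖p‖)) * ‖a • p + u‖ := by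
  have ha : |a| ≤ ‖φ‖ * ‖a • p + u‖ := by
    simpa [hp, hu] using φ.le_opNorm (a • p + u)
  have hu' : ‖u‖ ≤ (1 + ‖φ‖ * ‖p‖) * ‖a • p + u‖ :=
    calc ‖u‖ = ‖(a • p + u) - a • p‖ := by rw [add_sub_cancel_left]
      _ ≤ ‖a • p + u‖ + |a| * ‖p‖ := by
        simpa only [norm_smul, Real.norm_eq_abs] using norm_sub_le (a • p + u) (a • p)
      _ ≤ ‖a • p + u‖ + (‖φ‖ * ‖a • p + u‖) * ‖p‖ := by gcongr
      _ = (1 + ‖φ‖ * ‖p‖) * ‖a • p + u‖ := by ring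
  calc ‖a • q + v‖ ≤ |a| * ‖q‖ + ‖v‖ := by
        simpa only [norm_smul, Real.norm_eq_abs] using norm_add_le (a • q) v
    _ ≤ |a| * ‖q‖ + K * ‖u‖ := by gcongr
    _ ≤ (‖φ‖ * ‖a • p + u‖) * ‖q‖ + K * ((1 + ‖φ‖ * ‖p‖) * ‖a • p + u‖) := by gcongr
    _ = (‖φ‖ * ‖q‖ + K * (1 + ‖φ‖ * ‖p‖)) * ‖a • p + u‖ := by ring

theorem seqEquiv_iff {K : ℝ} (hK : 0 < K) {k : ℕ} :
    SeqEquiv K k x y ↔ ∀ a : ℕ → ℝ,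
      ‖∑ i ∈ Finset.range k, a i • x i‖ ≤ K * ‖∑ i ∈ Finset.range k, a i • y i‖ ∧
      ‖∑ i ∈ Finset.range k, a i • y i‖ ≤ K * ‖∑ i ∈ Finset.range k, a i • x i‖ := by
  simp only [SeqEquiv, one_div, inv_mul_le_iff₀ hK]

theorem SeqEquiv.of_tail {K C : ℝ} {k : ℕ} {φ ψ : StrongDual ℝ 𝒲} (hK : 0 < K)
    (h : SeqEquiv K k (fun i => x (i + 1)) (fun i => y (i + 1)))
    (hφ₀ : φ (x 0) = 1) (hφ : ∀ i < k, φ (x (i + 1)) = 0)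
    (hψ₀ : ψ (y 0) = 1) (hψ : ∀ i < k, ψ (y (i + 1)) = 0)
    (hCφ : ‖φ‖ * ‖y 0‖ + K * (1 + ‖φ‖ * ‖x 0‖) ≤ C)
    (hCψ : ‖ψ‖ * ‖x 0‖ + K * (1 + ‖ψ‖ * ‖y 0‖) ≤ C) : SeqEquiv C (k + 1) x y := by
  have hC : 0 < C := lt_of_lt_of_le (by positivity) hCφ
  refine (seqEquiv_iff hC).2 fun a => ?_
  obtain ⟨hxy, hyx⟩ := (seqEquiv_iff hK).1 h fun i => a (i + 1)
  have hφsum : φ (∑ i ∈ Finset.range k, a (i + 1) • x (i + 1)) = 0 := by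
    rw [map_sum]
    exact Finset.sum_eq_zero fun i hi => by rw [map_smul, hφ i (Finset.mem_range.1 hi), smul_zero]
  have hψsum : ψ (∑ i ∈ Finset.range k, a (i + 1) • y (i + 1)) = 0 := by
    rw [map_sum]
    exact Finset.sum_eq_zero fun i hi => by rw [map_smul, hψ i (Finset.mem_range.1 hi), smul_zero]
  simp only [Finset.sum_range_succ', add_comm _ (a 0 • _)]
  constructor
  · exact (norm_smul_add_le_of_apply_eq_one hK.le hψ₀ hψsum hxy (a 0)).trans (by gcongr)
  · exact (norm_smul_add_le_of_apply_eq_one hK.le hφ₀ hφsum hyx (a 0)).trans (by gcongr)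

theorem exists_forall_cons_mem_embTree {K : ℝ} (hK : 0 < K) {Y : Submodule ℝ 𝒲} {f : 𝒲}
    (hf : f ∈ Y) {φ ψ : StrongDual ℝ 𝒲} (hφ : φ f = 1) (hψ₀ : ψ (z 0) = 1)
    (hψ : ∀ n, ψ (z (n + 1)) = 0) :
    ∃ C : ℝ, 1 ≤ C ∧
      ∀ t ∈ embTree (fun n => z (n + 1)) ↑(Y ⊓ LinearMap.ker φ.toLinearMap) K,
        f :: t ∈ embTree z (Y : Set 𝒲) C := by
  refine ⟨max 1 (max (‖φ‖ * ‖z 0‖ + K * (1 + ‖φ‖ * ‖f‖)) (‖ψ‖ * ‖f‖ + K * (1 + ‖ψ‖ * ‖z 0‖))),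
    le_max_left _ _, fun t ⟨htY, ht⟩ => ⟨List.forall_mem_cons.2 ⟨hf, fun v hv => (htY v hv).1⟩, ?_⟩⟩
  refine SeqEquiv.of_tail (φ := φ) (ψ := ψ) hK ht hφ (fun i hi => ?_) hψ₀ (fun i _ => hψ i)
    ((le_max_left _ _).trans (le_max_right _ _)) ((le_max_right _ _).trans (le_max_right _ _))
  rw [List.getD_cons_succ, List.getD_eq_getElem _ _ hi]
  exact (htY _ (List.getElem_mem hi)).2

theorem embIndex_tail_inf_ker_le {Y : Submodule ℝ 𝒲} {f : 𝒲} (hf : f ∈ Y)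
    {φ ψ : StrongDual ℝ 𝒲} (hφ : φ f = 1) (hψ₀ : ψ (z 0) = 1) (hψ : ∀ n, ψ (z (n + 1)) = 0) :
    embIndex (fun n => z (n + 1)) ↑(Y ⊓ LinearMap.ker φ.toLinearMap) ≤
      embIndex z (Y : Set 𝒲) := by
  refine embIndex_le_iff.2 fun K hK => ?_
  obtain ⟨C, hC, hcons⟩ :=
    exists_forall_cons_mem_embTree (zero_lt_one.trans_le hK) hf hφ hψ₀ hψ
  exact (treeRank_le_of_cons_mem hcons).trans (treeRank_embTree_le_embIndex hC)

end EmbeddabilityIndex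

section AlphaMinimality

variable {𝒲 : Type} [NormedAddCommGroup 𝒲] [NormedSpace ℝ 𝒲] {z : ℕ → 𝒲}
  {X X' : Submodule ℝ 𝒲} {α : Ordinal}

/-- `[z n]` `α`-embeds into every infinite-dimensional subspace of `X`. Thus `[b n]` is
`α`-minimal when this holds with `X = [b n]` for every block sequence `(z n)` of `(b n)`. -/
def HereditarilyAlphaEmbeds (z : ℕ → 𝒲) (X : Submodule ℝ 𝒲) (α : Ordinal) : Prop :=
  ∀ Y ≤ X, ¬FiniteDimensional ℝ Y → (α : WithTop Ordinal) ≤ embIndex z (Y : Set 𝒲)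

theorem isAlphaMinimal_iff {b : ℕ → 𝒲} :
    IsAlphaMinimal b α ↔
      ∀ z, IsBlockSeq b z → HereditarilyAlphaEmbeds z (closedSpan (Set.range b)) α :=
  Iff.rfl

namespace HereditarilyAlphaEmbeds

theorem of_le_sup (h : HereditarilyAlphaEmbeds z X α) {F : Submodule ℝ 𝒲}
    [FiniteDimensional ℝ F] (hX' : X' ≤ X ⊔ F) : HereditarilyAlphaEmbeds z X' α :=
  fun _ hY hdim => (h _ inf_le_right
    (not_finiteDimensional_inf_of_le_sup hdim (hY.trans hX'))).trans (embIndex_mono inf_le_left)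

theorem of_tail {ψ : StrongDual ℝ 𝒲} (hψ₀ : ψ (z 0) = 1) (hψ : ∀ n, ψ (z (n + 1)) = 0)
    (h : HereditarilyAlphaEmbeds (fun n => z (n + 1)) X α) : HereditarilyAlphaEmbeds z X α := by
  intro Y hY hdim
  have hYbot : Y ≠ ⊥ := by
    rintro rfl
    exact hdim inferInstance
  obtain ⟨f, hfY, hf₀⟩ := Submodule.exists_mem_ne_zero_of_ne_bot hYbot
  obtain ⟨φ, hφ⟩ := SeparatingDual.exists_eq_one (R := ℝ) hf₀
  exact (h _ (inf_le_left.trans hY) (not_finiteDimensional_inf_ker hdim φ.toLinearMap)).trans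
    (embIndex_tail_inf_ker_le hfY hφ hψ₀ hψ)

theorem of_tail_add {ζ : ℕ → StrongDual ℝ 𝒲} (hζ : IsBiorthogonal ζ z) (N : ℕ)
    (h : HereditarilyAlphaEmbeds (fun n => z (n + N)) X α) : HereditarilyAlphaEmbeds z X α := by
  induction N generalizing z ζ with
  | zero => exact h
  | succ N ih =>
    exact of_tail (hζ.apply_self 0) (fun n => hζ.apply_of_ne n.succ_ne_zero.symm)
      (ih (hζ.comp_injective (add_left_injective 1)) h)

end HereditarilyAlphaEmbeds

theorem alphaMinimal_of_almost_contained_general {e x y : ℕ → 𝒲} {φ : ℕ → StrongDual ℝ 𝒲}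
    (hφ : IsBiorthogonal φ e) (hx : IsBlockSeq e x) (hy : IsBlockSeq e y)
    (hxy : ∀ᶠ n in atTop, x n ∈ closedSpan (Set.range y)) (hmin : IsAlphaMinimal y α) :
    IsAlphaMinimal x α := by
  obtain ⟨N, hN⟩ := eventually_atTop.1 hxy
  rw [isAlphaMinimal_iff] at hmin ⊢
  intro z hz
  have hez : IsBlockSeq e z := hx.trans hz
  have hmem (n : ℕ) : z (n + N) ∈ closedSpan (Set.range y) := by
    refine Submodule.span_le.2 ?_ (hz.mem_span_image_Ici (n + N))
    rintro _ ⟨i, hi, rfl⟩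
    exact hN i ((Nat.le_add_left N n).trans hi)
  have htail : IsBlockSeq y (fun n => z (n + N)) :=
    .of_mem_closedSpan hφ hy (hez.comp_strictMono add_left_strictMono) hmem
  obtain ⟨_, _, -, hζ⟩ := hez.exists_isBiorthogonal hφ
  have : FiniteDimensional ℝ (Submodule.span ℝ (x '' Set.Iio N)) :=
    FiniteDimensional.span_of_finite ℝ ((Set.finite_Iio N).image x)
  exact ((hmin _ htail).of_le_sup
    (closedSpan_range_le_sup_span (Submodule.isClosed_topologicalClosure _) hN)).of_tail_add hζ N

end AlphaMinimality

/-- Let `𝒲 = [e n]` have a Schauder basis and let `𝒳 = [x n]`,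
`𝒴 = [y n]` be block subspaces such that `x n ∈ 𝒴` for all but finitely many `n`.
If `[y n]` is `α`-minimal then `[x n]` is `α`-minimal.  (In particular, `α`-minimality is
preserved by passing to block subspaces.) -/
theorem alphaMinimal_of_almost_contained
    (𝒲 : Type) [NormedAddCommGroup 𝒲] [NormedSpace ℝ 𝒲] [CompleteSpace 𝒲]
    (e : ℕ → 𝒲) (he : IsSchauderBasis e)
    (x y : ℕ → 𝒲) (hx : IsBlockSeq e x) (hy : IsBlockSeq e y)
    (hxy : ∀ᶠ n in Filter.atTop, x n ∈ closedSpan (Set.range y))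
    (α : Ordinal) (hmin : IsAlphaMinimal y α) :
    IsAlphaMinimal x α := by
  exact alphaMinimal_of_almost_contained_general he.isBiorthogonal_coord hx hy hxy hmin

end Rosendal
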